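/- In the Oblivious k-Shot schedule (for 3 ≤ k ≤ √n), for every vertex v ∈ {0, …, n−1} and every step T, among the first k steps after T at which v belongs to the transmission set, at least one is a Round-Robin step, whose transmission set is the singleton {v}. Consequently, every vertex that becomes informed transmits at least once as the only transmitting node in the network. -/

import Mathlib

/-- The ceiling of the square root of a natural number: the least `m` with `n ≤ m²`. -/
def ceilSqrt (n : ℕ) : ℕ :=
  if Nat.sqrt n * Nat.sqrt n = n then Nat.sqrt n else Nat.sqrt n + 1

/-- The smallest prime `p` with `p ≥ m`. -/
def smallestPrimeGE (m : ℕ) : ℕ := Nat.find (Nat.exists_infinite_primes m)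

/-- `p` for the Oblivious k-Shot schedule: the smallest prime `≥ ⌈√n⌉`. -/
def obP (n : ℕ) : ℕ := smallestPrimeGE (ceilSqrt n)

/-- `K = ⌈p/(k−2)⌉` for the Oblivious k-Shot schedule (`k ≥ 3`). -/
def obK (n k : ℕ) : ℕ := (obP n + (k - 3)) / (k - 2)

/-- The point of the plane `(ZMod p) × (ZMod p)` associated with label `i`. -/
def pointOf (p : ℕ) (i : ℕ) : ZMod p × ZMod p := ((i / p : ℕ), (i % p : ℕ))

/-- Membership in the line `L_{a,b}` of direction `a ∈ {0,…,p}` and offset `b ∈ ZMod p`: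
`L_{p,b} = {(x,y) : x = b}` and `L_{a,b} = {(x,y) : y = a·x + b}` for `a < p`. -/
def lineMem (p a : ℕ) (b : ZMod p) (q : ZMod p × ZMod p) : Prop :=
  if a = p then q.1 = b else q.2 = (a : ZMod p) * q.1 + b

open Classical in
/-- The Oblivious k-Shot schedule on labels `{0,…,n−1}`.  Steps `t = 1, 2, …` come
in consecutive blocks of `K+1` steps.  The first step of the `r`-th block
(`r = 0, 1, …`) is the `r`-th Line-Transmit step, with transmission set
`{i < n : point(i) ∈ L_{a,b}}` where `b = r mod p` and `a = ⌊r/p⌋ mod (p+1)`.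
The remaining `K` steps of each block are Round-Robin steps; the `j`-th
Round-Robin step overall has transmission set `{j mod p²} ∩ {0,…,n−1}`. -/
noncomputable def obSched (n k : ℕ) : ℕ → Finset (Fin n) := fun t =>
  let p := obP n
  let K := obK n k
  if t = 0 then ∅
  else
    let t' := t - 1
    let r := t' / (K + 1)
    let pos := t' % (K + 1)
    if pos = 0 then
      Finset.univ.filter
        (fun i : Fin n => lineMem p ((r / p) % (p + 1)) ((r % p : ℕ) : ZMod p) (pointOf p (i : ℕ)))
    else
      Finset.univ.filter (fun i : Fin n => (i : ℕ) = (r * K + (pos - 1)) % (p ^ 2))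

theorem ob_prime (n : ℕ) : (obP n).Prime := (Nat.find_spec (Nat.exists_infinite_primes (ceilSqrt n))).2

theorem ob_le (n : ℕ) : n ≤ obP n ^ 2 := by
  have h1 : ceilSqrt n ≤ obP n := (Nat.find_spec (Nat.exists_infinite_primes (ceilSqrt n))).1
  have h2 : n ≤ ceilSqrt n ^ 2 := by
    unfold ceilSqrt
    split_ifs with h
    · rw [pow_two, h]
    · have := Nat.lt_succ_sqrt n
      rw [pow_two]
      exact this.le
  exact h2.trans (Nat.pow_le_pow_left h1 2)

theorem ob_K (n k : ℕ) (hk : 3 ≤ k) : obP n ≤ (k - 2) * obK n k := by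
  unfold obK
  obtain ⟨d, rfl⟩ := Nat.exists_eq_add_of_le hk
  have e1 : 3 + d - 3 = d := by omega
  have e2 : 3 + d - 2 = d + 1 := by omega
  rw [e1, e2]
  have h := Nat.div_add_mod (obP n + d) (d + 1)
  have h' := Nat.mod_lt (obP n + d) (Nat.succ_pos d)
  simp only [Nat.succ_eq_add_one] at h'
  omega

theorem ob_exists_mod (P v A : ℕ) (hv : v < P) : ∃ j, A ≤ j ∧ j < A + P ∧ j % P = v := by
  have h := Nat.div_add_mod A P
  have h' := Nat.mod_lt A (by omega : 0 < P)
  by_cases hc : A % P ≤ v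
  · refine ⟨P * (A / P) + v, by omega, by omega, ?_⟩
    rw [Nat.mul_add_mod, Nat.mod_eq_of_lt hv]
  · refine ⟨P * (A / P + 1) + v, ?_, ?_, ?_⟩
    · rw [Nat.mul_add]; omega
    · rw [Nat.mul_add]; omega
    · rw [Nat.mul_add_mod, Nat.mod_eq_of_lt hv]

theorem ob_rr (n k : ℕ) (v : Fin n) (r q : ℕ) (hq : q < obK n k)
    (h : (r * obK n k + q) % (obP n ^ 2) = v) :
    (r * (obK n k + 1) + q + 2 - 1) % (obK n k + 1) ≠ 0 ∧
    obSched n k (r * (obK n k + 1) + q + 2) = {v} := by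
  have e : r * (obK n k + 1) + q + 2 - 1 = (obK n k + 1) * r + (q + 1) := by
    rw [Nat.mul_comm]; omega
  have hm : (r * (obK n k + 1) + q + 2 - 1) % (obK n k + 1) = q + 1 := by
    rw [e, Nat.mul_add_mod, Nat.mod_eq_of_lt (by omega)]
  have hd : (r * (obK n k + 1) + q + 2 - 1) / (obK n k + 1) = r := by
    rw [e, Nat.mul_add_div (by omega), Nat.div_eq_of_lt (by omega), Nat.add_zero]
  refine ⟨by omega, ?_⟩
  unfold obSched
  simp only [hm, hd]
  rw [if_neg (by omega), if_neg (by omega)]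
  ext i
  simp only [Nat.add_sub_cancel, h, Finset.mem_filter, Finset.mem_univ, true_and,
    Finset.mem_singleton, Fin.ext_iff]

theorem ob_rr_mem (n k : ℕ) (v : Fin n) (t : ℕ) (ht : (t - 1) % (obK n k + 1) ≠ 0)
    (hv : v ∈ obSched n k t) : obSched n k t = {v} := by
  unfold obSched at hv ⊢
  have h0 : t ≠ 0 := by rintro rfl; simp at ht
  simp only [h0, ht, if_false, Finset.mem_filter, Finset.mem_univ, true_and] at hv ⊢
  ext i
  simp [← hv, Fin.ext_iff]

theorem ob_line_mem (n k : ℕ) (v : Fin n) (t : ℕ) (ht : (t - 1) % (obK n k + 1) = 0)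
    (hv : v ∈ obSched n k t) :
    0 < t ∧ lineMem (obP n) ((((t - 1) / (obK n k + 1)) / obP n) % (obP n + 1))
      ((((t - 1) / (obK n k + 1)) % obP n : ℕ) : ZMod (obP n)) (pointOf (obP n) (v : ℕ)) := by
  unfold obSched at hv
  by_cases h0 : t = 0
  · simp [h0] at hv
  · simp only [h0, ht, if_false, if_true, Finset.mem_filter, Finset.mem_univ, true_and] at hv
    exact ⟨by omega, hv⟩

theorem ob_line_unique (p a : ℕ) (b b' : ZMod p) (q : ZMod p × ZMod p)
    (h : lineMem p a b q) (h' : lineMem p a b' q) : b = b' := by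
  unfold lineMem at h h'
  split_ifs at h h'
  · exact h.symm.trans h'
  · exact add_left_cancel (h.symm.trans h')

theorem ob_r_unique (p r r' : ℕ) (hp : 0 < p) (q : ZMod p × ZMod p)
    (h : lineMem p ((r / p) % (p + 1)) ((r % p : ℕ) : ZMod p) q)
    (h' : lineMem p ((r' / p) % (p + 1)) ((r' % p : ℕ) : ZMod p) q)
    (e : r / p = r' / p) : r = r' := by
  rw [← e] at h'
  have := ob_line_unique _ _ _ _ _ h h'
  rw [ZMod.natCast_eq_natCast_iff'] at this
  simp only [Nat.mod_mod] at this
  rw [← Nat.div_add_mod r p, ← Nat.div_add_mod r' p, e, this]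

/-- **Validity.** In the Oblivious k-Shot schedule (`3 ≤ k ≤ √n`), for
every vertex `v` and every step `T`, among the first `k` steps after `T` at which `v`
belongs to the transmission set there is a Round-Robin step whose transmission set is
exactly the singleton `{v}`.  (Hence every informed vertex transmits at least once as
the only transmitting node of the network.) -/
theorem oblivious_kshot_validity (n k : ℕ) (hk : 3 ≤ k) (hkn : k ^ 2 ≤ n)
    (v : Fin n) (T : ℕ) :
    ∃ t : ℕ, T < t ∧
      -- `t` is a Round-Robin step:
      (t - 1) % (obK n k + 1) ≠ 0 ∧
      -- the transmission set of step `t` is the singleton `{v}`: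
      obSched n k t = {v} ∧
      -- `t` is among the first `k` steps after `T` at which `v` transmits, i.e.
      -- fewer than `k` steps `t'` with `T < t' < t` have `v` in the transmission set:
      ((Finset.Ioo T t).filter (fun t' => v ∈ obSched n k t')).card < k := by
  have hp := (ob_prime n).pos
  have hKp := ob_K n k hk
  have hvP : (v : ℕ) < obP n ^ 2 := lt_of_lt_of_le v.2 (ob_le n)
  have hK : 0 < obK n k := by
    rcases Nat.eq_zero_or_pos (obK n k) with h | h
    · rw [h] at hKp; omega
    · exact h
  -- a Round-Robin step for `v` whose block is at least `r0`
  have key : ∀ r0, ∃ r q, q < obK n k ∧ r0 ≤ r ∧ r * obK n k + q < r0 * obK n k + obP n ^ 2 ∧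
      (r * obK n k + q) % (obP n ^ 2) = v := by
    intro r0
    obtain ⟨j, h1, h2, h3⟩ := ob_exists_mod (obP n ^ 2) v (r0 * obK n k) hvP
    have e : j / obK n k * obK n k + j % obK n k = j := by
      rw [Nat.mul_comm]; exact Nat.div_add_mod j _
    refine ⟨j / obK n k, j % obK n k, Nat.mod_lt _ hK, ?_, ?_, ?_⟩
    · exact (Nat.le_div_iff_mul_le hK).2 h1
    · rw [e]; exact h2
    · rw [e]; exact h3
  have hex : ∃ t, T < t ∧ (t - 1) % (obK n k + 1) ≠ 0 ∧ obSched n k t = {v} := by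
    obtain ⟨r, q, hq, hr, -, hm⟩ := key T
    obtain ⟨h1, h2⟩ := ob_rr n k v r q hq hm
    refine ⟨_, ?_, h1, h2⟩
    nlinarith
  classical
  obtain ⟨t, ⟨hT, hrr, hs⟩, hmin⟩ : ∃ t, (T < t ∧ (t - 1) % (obK n k + 1) ≠ 0 ∧
      obSched n k t = {v}) ∧ ∀ s, s < t → ¬ (T < s ∧ (s - 1) % (obK n k + 1) ≠ 0 ∧
      obSched n k s = {v}) := ⟨Nat.find hex, Nat.find_spec hex, fun s hs => Nat.find_min hex hs⟩
  refine ⟨t, hT, hrr, hs, ?_⟩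
  set S := (Finset.Ioo T t).filter (fun t' => v ∈ obSched n k t') with hS
  have hline : ∀ s ∈ S, T < s ∧ s < t ∧ (s - 1) % (obK n k + 1) = 0 ∧ v ∈ obSched n k s := by
    intro s hs'
    simp only [hS, Finset.mem_filter, Finset.mem_Ioo] at hs'
    refine ⟨hs'.1.1, hs'.1.2, ?_, hs'.2⟩
    by_contra hne
    exact hmin s hs'.1.2 ⟨hs'.1.1, hne, ob_rr_mem n k v s hne hs'.2⟩
  have heq : ∀ s ∈ S, s = (s - 1) / (obK n k + 1) * (obK n k + 1) + 1 := by
    intro s hs'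
    obtain ⟨h1, h2, h3, h4⟩ := hline s hs'
    have := Nat.div_add_mod (s - 1) (obK n k + 1)
    rw [h3, Nat.mul_comm] at this
    omega
  have hinj : Set.InjOn (fun s => (s - 1) / (obK n k + 1) / obP n) (S : Set ℕ) := by
    intro s hs1 s' hs2 e
    have hs1 : s ∈ S := hs1
    have hs2 : s' ∈ S := hs2
    have a1 := hline s hs1
    have a2 := hline s' hs2
    have := ob_r_unique _ _ _ hp _ (ob_line_mem n k v s a1.2.2.1 a1.2.2.2).2
      (ob_line_mem n k v s' a2.2.2.1 a2.2.2.2).2 e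
    rw [heq s hs1, heq s' hs2, this]
  have hgap : ∀ s ∈ S, ∀ s' ∈ S,
      (s' - 1) / (obK n k + 1) < (s - 1) / (obK n k + 1) + obP n * (k - 2) := by
    intro s hs1 s' hs2
    by_contra hcon
    push Not at hcon
    obtain ⟨r, q, hq, hr, hlt, hm⟩ := key ((s - 1) / (obK n k + 1))
    obtain ⟨g1, g2⟩ := ob_rr n k v r q hq hm
    have a1 := hline s hs1
    have a2 := hline s' hs2
    have b1 := heq s hs1
    have b2 := heq s' hs2
    generalize (s - 1) / (obK n k + 1) = R at *
    generalize (s' - 1) / (obK n k + 1) = R' at *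
    have c1 : R * (obK n k + 1) ≤ r * (obK n k + 1) := Nat.mul_le_mul_right _ hr
    have c2 : r < R' := by
      by_contra hc
      push Not at hc
      have d1 : (R + obP n * (k - 2)) * obK n k ≤ r * obK n k :=
        Nat.mul_le_mul_right _ (hcon.trans hc)
      have d2 : obP n * obP n ≤ obP n * ((k - 2) * obK n k) := Nat.mul_le_mul_left _ hKp
      nlinarith
    have c3 : (r + 1) * (obK n k + 1) ≤ R' * (obK n k + 1) := Nat.mul_le_mul_right _ c2
    rw [Nat.add_mul] at c3
    exact hmin _ (by omega) ⟨by omega, g1, g2⟩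
  rcases S.eq_empty_or_nonempty with h | h
  · rw [h]; simp; omega
  · obtain ⟨m, hm, hmle⟩ := S.exists_min_image (fun s => (s - 1) / (obK n k + 1) / obP n) h
    have hsub : S.image (fun s => (s - 1) / (obK n k + 1) / obP n) ⊆
        Finset.Icc ((m - 1) / (obK n k + 1) / obP n)
          ((m - 1) / (obK n k + 1) / obP n + (k - 2)) := by
      intro x hx
      obtain ⟨s, hs', rfl⟩ := Finset.mem_image.1 hx
      refine Finset.mem_Icc.2 ⟨hmle s hs', ?_⟩
      have := Nat.div_le_div_right (c := obP n) (hgap m hm s hs').le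
      rwa [Nat.add_mul_div_left _ _ hp] at this
    have hc := Finset.card_le_card hsub
    rw [Finset.card_image_of_injOn hinj, Nat.card_Icc] at hc
    omega
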